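/- arXiv:1602.05973 — 14 statements merged into one kernel-verified Lean document; each statement's English description precedes it below -/
import Mathlib

section
/- Let n ≥ 1 and fix t ∈ (ZMod 2)^n. Define g : (ZMod 2)^n → ℝ by g(x) = 2^{-n} · Σ_{y ∈ t^⊥} (-1)^{x·y}, where t^⊥ = {y ∈ (ZMod 2)^n : y·t = 0}. Then for every x ∈ (ZMod 2)^n, g(x) = (1/2)·(δ_{x,0} + δ_{x,t}), where δ_{a,b} equals 1 if a = b and 0 otherwise. -/
lemma simon_aux_full (n : ℕ) (z : Fin n → ZMod 2) :
    ∑ y : Fin n → ZMod 2, (if (∑ i, z i * y i : ZMod 2) = 0 then (1 : ℝ) else -1)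
      = if z = 0 then (2 : ℝ) ^ n else 0 := by
  split_ifs with h
  · subst h
    simp
  · obtain ⟨j, hj⟩ := Function.ne_iff.mp h
    have hj1 : z j = 1 := by
      have key : ∀ a : ZMod 2, a ≠ 0 → a = 1 := by decide
      exact key _ hj
    have e := Equiv.sum_comp (Equiv.addRight (Pi.single j (1 : ZMod 2)))
      (fun y : Fin n → ZMod 2 => (if (∑ i, z i * y i : ZMod 2) = 0 then (1 : ℝ) else -1))
    have h2 : ∀ y : Fin n → ZMod 2,
        (if (∑ i, z i * (Equiv.addRight (Pi.single j (1 : ZMod 2)) y) i : ZMod 2) = 0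
          then (1 : ℝ) else -1)
        = -(if (∑ i, z i * y i : ZMod 2) = 0 then (1 : ℝ) else -1) := by
      intro y
      have h3 : (∑ i, z i * (Equiv.addRight (Pi.single j (1 : ZMod 2)) y) i : ZMod 2)
          = (∑ i, z i * y i) + 1 := by
        simp [mul_add, Finset.sum_add_distrib, Pi.single_apply, hj1]
      rw [h3]
      generalize (∑ i, z i * y i : ZMod 2) = a
      have key : ∀ a : ZMod 2, (a = 0 ∧ a + 1 ≠ 0) ∨ (a ≠ 0 ∧ a + 1 = 0) := by decide
      rcases key a with ⟨h, h'⟩ | ⟨h, h'⟩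
      · rw [if_neg h', if_pos h]
      · rw [if_pos h', if_neg h, neg_neg]
    simp only [h2, Finset.sum_neg_distrib] at e
    linarith

/-- For `t ∈ (ZMod 2)^n`, the function
`g(x) = 2^{-n} · Σ_{y ∈ t^⊥} (-1)^{x·y}` satisfies
`g(x) = (1/2)·(δ_{x,0} + δ_{x,t})`. -/
theorem simon_lemma_sum (n : ℕ) (hn : 1 ≤ n) (t : Fin n → ZMod 2)
    (x : Fin n → ZMod 2) :
    ((2 : ℝ) ^ n)⁻¹ *
      ∑ y ∈ Finset.univ.filter (fun y : Fin n → ZMod 2 => (∑ i, y i * t i) = 0),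
        (if (∑ i, x i * y i : ZMod 2) = 0 then (1 : ℝ) else -1)
    = (1 / 2) * ((if x = 0 then (1 : ℝ) else 0) + (if x = t then (1 : ℝ) else 0)) := by
  have h1 : ∀ y : Fin n → ZMod 2,
      (if (∑ i, y i * t i) = 0 then
        (if (∑ i, x i * y i : ZMod 2) = 0 then (1 : ℝ) else -1) else 0)
      = (1 / 2) * ((if (∑ i, x i * y i : ZMod 2) = 0 then (1 : ℝ) else -1)
        + (if (∑ i, (x - t) i * y i : ZMod 2) = 0 then (1 : ℝ) else -1)) := by
    intro y
    have h3 : (∑ i, (x - t) i * y i : ZMod 2) = (∑ i, x i * y i) - ∑ i, y i * t i := by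
      rw [← Finset.sum_sub_distrib]
      refine Finset.sum_congr rfl fun i _ => ?_
      rw [Pi.sub_apply]
      ring
    rw [h3]
    generalize (∑ i, x i * y i : ZMod 2) = a
    generalize (∑ i, y i * t i : ZMod 2) = b
    have key : ∀ a b : ZMod 2, (b = 0 ∧ a - b = a) ∨ (b ≠ 0 ∧ a = 0 ∧ a - b ≠ 0) ∨
      (b ≠ 0 ∧ a ≠ 0 ∧ a - b = 0) := by decide
    rcases key a b with ⟨h, h'⟩ | ⟨h, h', h''⟩ | ⟨h, h', h''⟩
    · rw [if_pos h, h']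
      ring
    · rw [if_neg h, if_pos h', if_neg h'']
      ring
    · rw [if_neg h, if_neg h', if_pos h'']
      ring
  rw [Finset.sum_filter, Finset.sum_congr rfl fun y _ => h1 y, ← Finset.mul_sum,
    Finset.sum_add_distrib, simon_aux_full, simon_aux_full]
  simp only [sub_eq_zero]
  have h2 : (2 : ℝ) ^ n ≠ 0 := by positivity
  split_ifs <;> field_simp <;> simp
end

section
/- Let n ≥ 1, let A be any type, let f : (ZMod 2)^n → A be any function, and fix t ∈ (ZMod 2)^n. Then, as real numbers, 2^{-2n} · Σ_{y ∈ t^⊥} Σ_{x, x' ∈ (ZMod 2)^n, f(x) = f(x')} (-1)^{(x + x')·y} = (1/2)·(1 + |{x ∈ (ZMod 2)^n : f(x) = f(x + t)}| / 2^n). (This quantity is the probability that one run of Simon's subroutine applied to f outputs a vector u with u·t = 0.) -/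
/-- The sign character on `ZMod 2`. -/
noncomputable def simonChi (z : ZMod 2) : ℝ := if z = 0 then 1 else -1

lemma simonChi_add (a b : ZMod 2) : simonChi (a + b) = simonChi a * simonChi b := by
  have h : ∀ z : ZMod 2, z = 0 ∨ z = 1 := by decide
  have h2 : (1 : ZMod 2) + 1 = 0 := by decide
  rcases h a with rfl | rfl <;> rcases h b with rfl | rfl <;> simp [simonChi, h2]

lemma simonChi_sum (n : ℕ) (w : Fin n → ZMod 2) :
    ∑ y : Fin n → ZMod 2, simonChi (∑ i, w i * y i) = if w = 0 then (2 : ℝ) ^ n else 0 := by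
  split_ifs with hw
  · subst hw
    simp [simonChi]
  · obtain ⟨i, hi⟩ := Function.ne_iff.mp hw
    have h1 : w i = 1 := by
      have h : ∀ z : ZMod 2, z ≠ 0 → z = 1 := by decide
      exact h _ hi
    have key : ∑ y : Fin n → ZMod 2, simonChi (∑ j, w j * y j)
        = ∑ y : Fin n → ZMod 2, - simonChi (∑ j, w j * y j) := by
      rw [← Equiv.sum_comp (Equiv.addRight (Pi.single i (1 : ZMod 2)))]
      refine Finset.sum_congr rfl fun y _ => ?_
      have : ∑ j, w j * (Equiv.addRight (Pi.single i (1 : ZMod 2)) y) j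
          = (∑ j, w j * y j) + 1 := by
        simp [mul_add, Finset.sum_add_distrib, Pi.single_apply, h1]
      rw [this, simonChi_add]
      simp [simonChi]
    rw [Finset.sum_neg_distrib] at key
    linarith

lemma simon_inner (n : ℕ) (t w : Fin n → ZMod 2) :
    ∑ y : Fin n → ZMod 2, (if (∑ i, y i * t i) = 0 then simonChi (∑ i, w i * y i) else 0)
      = (1 / 2) * ((if w = 0 then (2 : ℝ) ^ n else 0) + if w + t = 0 then (2 : ℝ) ^ n else 0) := by
  rw [← simonChi_sum, ← simonChi_sum, ← Finset.sum_add_distrib, Finset.mul_sum]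
  refine Finset.sum_congr rfl fun y _ => ?_
  have : ∑ i, (w + t) i * y i = (∑ i, w i * y i) + ∑ i, y i * t i := by
    rw [← Finset.sum_add_distrib]
    refine Finset.sum_congr rfl fun i _ => ?_
    simp only [Pi.add_apply]
    ring
  rw [this, simonChi_add]
  split_ifs with h
  · rw [h]
    simp [simonChi]
    ring
  · simp [simonChi, h]

open scoped Classical in
/-- The probability that one run of Simon's subroutine applied to `f`
outputs a vector `u` with `u·t = 0`:
`2^{-2n} · Σ_{y ∈ t^⊥} Σ_{x, x' with f(x) = f(x')} (-1)^{(x+x')·y}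
  = (1/2)·(1 + |{x : f(x) = f(x+t)}| / 2^n)`. -/
theorem simon_subroutine_prob (n : ℕ) (hn : 1 ≤ n) (A : Type*)
    (f : (Fin n → ZMod 2) → A) (t : Fin n → ZMod 2) :
    ((2 : ℝ) ^ (2 * n))⁻¹ *
      ∑ y ∈ Finset.univ.filter (fun y : Fin n → ZMod 2 => (∑ i, y i * t i) = 0),
        ∑ x : Fin n → ZMod 2,
          ∑ x' ∈ Finset.univ.filter (fun x' : Fin n → ZMod 2 => f x = f x'),
            (if (∑ i, (x i + x' i) * y i : ZMod 2) = 0 then (1 : ℝ) else -1)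
    = (1 / 2) *
        (1 + ((Finset.univ.filter
            (fun x : Fin n → ZMod 2 => f x = f (x + t))).card : ℝ) / 2 ^ n) := by
  have hxx : ∀ x x' : Fin n → ZMod 2, x + x' = 0 ↔ x' = x := by
    have h : ∀ a b : ZMod 2, a + b = 0 ↔ b = a := by decide
    intro x x'
    simp only [funext_iff, Pi.add_apply, Pi.zero_apply, h]
  have hxt : ∀ x x' : Fin n → ZMod 2, x + x' + t = 0 ↔ x' = x + t := by
    intro x x'
    rw [add_right_comm, hxx]
  have main : ∑ y ∈ Finset.univ.filter (fun y : Fin n → ZMod 2 => (∑ i, y i * t i) = 0),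
        ∑ x : Fin n → ZMod 2,
          ∑ x' ∈ Finset.univ.filter (fun x' : Fin n → ZMod 2 => f x = f x'),
            (if (∑ i, (x i + x' i) * y i : ZMod 2) = 0 then (1 : ℝ) else -1)
      = ∑ x : Fin n → ZMod 2, (1 / 2) * ((2 : ℝ) ^ n +
          if f x = f (x + t) then (2 : ℝ) ^ n else 0) := by
    rw [Finset.sum_comm]
    refine Finset.sum_congr rfl fun x _ => ?_
    rw [Finset.sum_comm]
    have step : ∀ x' : Fin n → ZMod 2,
        ∑ y ∈ Finset.univ.filter (fun y : Fin n → ZMod 2 => (∑ i, y i * t i) = 0),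
          (if (∑ i, (x i + x' i) * y i : ZMod 2) = 0 then (1 : ℝ) else -1)
        = (1 / 2) * ((if x' = x then (2 : ℝ) ^ n else 0)
            + if x' = x + t then (2 : ℝ) ^ n else 0) := by
      intro x'
      have := simon_inner n t (x + x')
      simp only [hxt x x', hxx x x'] at this
      rw [Finset.sum_filter]
      simp only [simonChi, Pi.add_apply] at this
      convert this
    simp only [step]
    rw [← Finset.mul_sum, Finset.sum_add_distrib, Finset.sum_ite_eq', Finset.sum_ite_eq']
    simp
  rw [main, ← Finset.mul_sum, Finset.sum_add_distrib, ← Finset.sum_filter]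
  simp only [Finset.sum_const, nsmul_eq_mul, Finset.card_univ, Fintype.card_fun, ZMod.card,
    Fintype.card_fin]
  push_cast
  have h2 : (2 : ℝ) ^ n ≠ 0 := by positivity
  rw [mul_comm 2 n, pow_mul]
  field_simp
end

section
/- (Simon's algorithm with approximate promise, probabilistic core.) Let n ≥ 1, c ≥ 1 and m = c·n. Let s ∈ (ZMod 2)^n with s ≠ 0, let p₀ ∈ ℝ with 0 ≤ p₀ < 1, and let μ be a probability measure (PMF) on (ZMod 2)^n such that μ({u : u·s = 0}) = 1 and such that for every t ∈ (ZMod 2)^n with t ∉ {0, s}, μ({u : u·t = 0}) ≤ (1 + p₀)/2. Let u₁, …, u_m be drawn i.i.d. from μ (i.e., consider the m-fold product measure). Then the probability that the linear span of {u₁, …, u_m} equals s^⊥ = {t : t·s = 0} (in which case s is recovered unambiguously by linear algebra) is at least 1 − (2·((1 + p₀)/2)^c)^n. -/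
open MeasureTheory

/-- Simon's algorithm with approximate promise, probabilistic core:
if `μ` is supported on `s^⊥` and gives mass at most `(1+p₀)/2` to every hyperplane
`t^⊥` with `t ∉ {0, s}`, then `m = c·n` i.i.d. samples from `μ` span `s^⊥` with
probability at least `1 − (2·((1+p₀)/2)^c)^n`. -/
theorem simon_approximate_promise (n c : ℕ) (hn : 1 ≤ n) (hc : 1 ≤ c)
    (m : ℕ) (hm : m = c * n)
    (s : Fin n → ZMod 2) (hs : s ≠ 0)
    (p₀ : ℝ) (hp₀ : 0 ≤ p₀) (hp₁ : p₀ < 1)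
    (μ : PMF (Fin n → ZMod 2))
    (hsupp : μ.toMeasure {u : Fin n → ZMod 2 | (∑ i, u i * s i) = 0} = 1)
    (hhyp : ∀ t : Fin n → ZMod 2, t ≠ 0 → t ≠ s →
      μ.toMeasure {u : Fin n → ZMod 2 | (∑ i, u i * t i) = 0}
        ≤ ENNReal.ofReal ((1 + p₀) / 2)) :
    ENNReal.ofReal (1 - (2 * ((1 + p₀) / 2) ^ c) ^ n)
      ≤ Measure.pi (fun _ : Fin m => μ.toMeasure)
          {v : Fin m → (Fin n → ZMod 2) |
            (Submodule.span (ZMod 2) (Set.range v) : Set (Fin n → ZMod 2))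
              = {t : Fin n → ZMod 2 | (∑ i, t i * s i) = 0}} := by
  have hq0 : 0 ≤ (1 + p₀) / 2 := by positivity
  set q : ENNReal := ENNReal.ofReal ((1 + p₀) / 2) with hq
  set P := Measure.pi (fun _ : Fin m => μ.toMeasure) with hP
  set G : Set (Fin m → (Fin n → ZMod 2)) := {v : Fin m → (Fin n → ZMod 2) |
            (Submodule.span (ZMod 2) (Set.range v) : Set (Fin n → ZMod 2))
              = {t : Fin n → ZMod 2 | (∑ i, t i * s i) = 0}} with hG
  set A : Set (Fin m → (Fin n → ZMod 2)) :=
    {v | ∀ i, v i ∈ {u : Fin n → ZMod 2 | (∑ i, u i * s i) = 0}} with hA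
  set B : (Fin n → ZMod 2) → Set (Fin m → (Fin n → ZMod 2)) := fun t =>
    {v | ∀ i, v i ∈ {u : Fin n → ZMod 2 | (∑ i, u i * t i) = 0}} with hB
  set T : Finset (Fin n → ZMod 2) := Finset.univ.filter (fun t => t ≠ 0 ∧ t ≠ s) with hT
  have hpi : ∀ S : Set (Fin n → ZMod 2),
      P {v | ∀ i, v i ∈ S} = (μ.toMeasure S) ^ m := by
    intro S
    have h1 : {v : Fin m → (Fin n → ZMod 2) | ∀ i, v i ∈ S} = Set.pi Set.univ (fun _ => S) := by
      ext v; simp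
    rw [h1, hP, Measure.pi_pi]
    simp
  have hPA : P A = 1 := by rw [hA, hpi, hsupp, one_pow]
  have hPB : ∀ t ∈ T, P (B t) ≤ q ^ m := by
    intro t ht
    simp only [hT, Finset.mem_filter, Finset.mem_univ, true_and] at ht
    simp only [hB]
    rw [hpi]
    exact pow_le_pow_left' (hhyp t ht.1 ht.2) m
  have hsub : A ⊆ G ∪ ⋃ t ∈ T, B t := by
    intro v hv
    by_cases hg : v ∈ G
    · exact Or.inl hg
    right
    have hle : (Submodule.span (ZMod 2) (Set.range v) : Set (Fin n → ZMod 2))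
        ⊆ {t : Fin n → ZMod 2 | (∑ i, t i * s i) = 0} := by
      intro x hx
      have hx' : x ∈ Submodule.span (ZMod 2) (Set.range v) := hx
      clear hx
      induction hx' using Submodule.span_induction with
      | mem x hx =>
        obtain ⟨i, rfl⟩ := hx
        exact hv i
      | zero => simp
      | add x y hx hy h1 h2 =>
        simp only [Set.mem_ofPred_eq] at h1 h2
        simp [add_mul, Finset.sum_add_distrib, h1, h2]
      | smul a x hx h1 =>
        simp only [Set.mem_ofPred_eq] at h1
        simp [mul_assoc, ← Finset.mul_sum, h1]
    have hnot : ¬ ({t : Fin n → ZMod 2 | (∑ i, t i * s i) = 0} ⊆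
        (Submodule.span (ZMod 2) (Set.range v) : Set (Fin n → ZMod 2))) :=
      fun h => hg (Set.Subset.antisymm hle h)
    obtain ⟨w, hw, hwn⟩ := Set.not_subset.1 hnot
    obtain ⟨f, hfw, hf⟩ := Submodule.exists_le_ker_of_notMem hwn
    have hfe : ∀ x, f x = ∑ i, x i * f (Pi.single i 1) := by
      intro x
      conv_lhs => rw [LinearMap.pi_apply_eq_sum_univ f x]
      refine Finset.sum_congr rfl fun i _ => ?_
      rw [smul_eq_mul]
      congr 2
      ext j
      simp [Pi.single_apply, eq_comm]
    simp only [Set.mem_iUnion]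
    refine ⟨fun i => f (Pi.single i 1), ?_, ?_⟩
    · simp only [hT, Finset.mem_filter, Finset.mem_univ, true_and]
      constructor
      · intro h0
        apply hfw
        rw [hfe]
        exact Finset.sum_eq_zero fun i _ => by rw [show f (Pi.single i 1) = 0 from congrFun h0 i, mul_zero]
      · intro h0
        apply hfw
        rw [hfe]
        refine Eq.trans (Finset.sum_congr rfl fun i _ => ?_) hw
        rw [← congrFun h0 i]
    · intro i
      show ∑ j, v i j * f (Pi.single j 1) = 0
      rw [← hfe]
      exact hf (Submodule.subset_span ⟨i, rfl⟩)
  have hcard : (T.card : ENNReal) ≤ 2 ^ n := by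
    have : T.card ≤ 2 ^ n := by
      refine (Finset.card_filter_le _ _).trans ?_
      simp [ZMod.card]
    exact_mod_cast this
  have hmain : 1 ≤ P G + 2 ^ n * q ^ m := by
    calc 1 = P A := hPA.symm
      _ ≤ P (G ∪ ⋃ t ∈ T, B t) := measure_mono hsub
      _ ≤ P G + P (⋃ t ∈ T, B t) := measure_union_le _ _
      _ ≤ P G + ∑ t ∈ T, P (B t) := by gcongr; exact measure_biUnion_finset_le _ _
      _ ≤ P G + ∑ t ∈ T, q ^ m := by gcongr with t ht; exact hPB t ht
      _ ≤ P G + 2 ^ n * q ^ m := by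
        rw [Finset.sum_const, nsmul_eq_mul]; gcongr
  have hval : ENNReal.ofReal ((2 * ((1 + p₀) / 2) ^ c) ^ n) = 2 ^ n * q ^ m := by
    rw [mul_pow, ← pow_mul, ← hm, ENNReal.ofReal_mul (by positivity), ENNReal.ofReal_pow hq0,
      ENNReal.ofReal_pow (by norm_num)]
    simp [hq]
  rw [ENNReal.ofReal_sub _ (by positivity), hval, ENNReal.ofReal_one]
  exact tsub_le_iff_right.2 hmain
end

section
/- (Simon's algorithm without promise, probabilistic core.) Let n ≥ 1, c ≥ 1 and m = c·n. Let A be a type, f : (ZMod 2)^n → A a function, and for each t ∈ (ZMod 2)^n set p_t = |{x : f(x + t) = f(x)}| / 2^n. Let p₀ ∈ ℝ with 0 ≤ p₀ ≤ 1, and let μ be a probability measure (PMF) on (ZMod 2)^n such that for every t ∈ (ZMod 2)^n, μ({u : u·t = 0}) = (1 + p_t)/2. Let u₁, …, u_m be drawn i.i.d. from μ. Then the probability that there exists t ∈ (ZMod 2)^n with p_t < p₀ and u_i·t = 0 for all i = 1, …, m is at most 2^n · ((1 + p₀)/2)^{c·n}. -/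
open MeasureTheory

open scoped Classical in
/-- Simon's algorithm without promise, probabilistic core:
with `p_t = |{x : f(x+t) = f(x)}|/2^n` and `μ({u : u·t = 0}) = (1+p_t)/2` for all `t`,
the probability that `m = c·n` i.i.d. samples from `μ` are all orthogonal to some `t`
with `p_t < p₀` is at most `2^n · ((1+p₀)/2)^{c·n}`. -/
theorem simon_without_promise (n c : ℕ) (hn : 1 ≤ n) (hc : 1 ≤ c)
    (m : ℕ) (hm : m = c * n)
    (A : Type*) (f : (Fin n → ZMod 2) → A)
    (p : (Fin n → ZMod 2) → ℝ)
    (hp : ∀ t : Fin n → ZMod 2,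
      p t = ((Finset.univ.filter
          (fun x : Fin n → ZMod 2 => f (x + t) = f x)).card : ℝ) / 2 ^ n)
    (p₀ : ℝ) (h0 : 0 ≤ p₀) (h1 : p₀ ≤ 1)
    (μ : PMF (Fin n → ZMod 2))
    (hμ : ∀ t : Fin n → ZMod 2,
      μ.toMeasure {u : Fin n → ZMod 2 | (∑ i, u i * t i) = 0}
        = ENNReal.ofReal ((1 + p t) / 2)) :
    Measure.pi (fun _ : Fin m => μ.toMeasure)
        {v : Fin m → (Fin n → ZMod 2) |
          ∃ t : Fin n → ZMod 2, p t < p₀ ∧ ∀ i : Fin m, (∑ j, v i j * t j) = 0}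
      ≤ ENNReal.ofReal ((2 : ℝ) ^ n * ((1 + p₀) / 2) ^ (c * n)) := by
  have key : ∀ t : Fin n → ZMod 2, p t < p₀ →
      Measure.pi (fun _ : Fin m => μ.toMeasure)
        {v : Fin m → (Fin n → ZMod 2) | ∀ i : Fin m, (∑ j, v i j * t j) = 0}
      ≤ ENNReal.ofReal (((1 + p₀) / 2) ^ (c * n)) := by
    intro t ht
    have hs : {v : Fin m → (Fin n → ZMod 2) | ∀ i : Fin m, (∑ j, v i j * t j) = 0}
        = Set.univ.pi (fun _ : Fin m => {u : Fin n → ZMod 2 | (∑ i, u i * t i) = 0}) := by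
      ext v
      simp
    rw [hs, Measure.pi_pi]
    simp only [hμ, Finset.prod_const, Finset.card_univ, Fintype.card_fin]
    rw [ENNReal.ofReal_pow (by linarith), hm]
    gcongr
  have hsub : {v : Fin m → (Fin n → ZMod 2) |
          ∃ t : Fin n → ZMod 2, p t < p₀ ∧ ∀ i : Fin m, (∑ j, v i j * t j) = 0}
      ⊆ ⋃ t ∈ (Finset.univ.filter (fun t : Fin n → ZMod 2 => p t < p₀)),
        {v : Fin m → (Fin n → ZMod 2) | ∀ i : Fin m, (∑ j, v i j * t j) = 0} := by
    rintro v ⟨t, ht, hv⟩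
    simp only [Set.mem_iUnion]
    exact ⟨t, by simpa using ht, hv⟩
  refine (measure_mono hsub).trans ((measure_biUnion_finset_le _ _).trans ?_)
  refine (Finset.sum_le_card_nsmul _ _ (ENNReal.ofReal (((1 + p₀) / 2) ^ (c * n)))
    (fun t ht => key t (by simpa using ht))).trans ?_
  rw [nsmul_eq_mul, ENNReal.ofReal_mul (by positivity)]
  gcongr
  rw [← ENNReal.ofReal_natCast]
  apply ENNReal.ofReal_le_ofReal
  have h := Finset.card_filter_le (Finset.univ : Finset (Fin n → ZMod 2)) (fun t => p t < p₀)
  have hcard : (Finset.univ : Finset (Fin n → ZMod 2)).card = 2 ^ n := by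
    simp [Finset.card_univ, ZMod.card]
  rw [hcard] at h
  exact_mod_cast h
end

section
/- Let R₁, R₂ : (ZMod 2)^n → (ZMod 2)^n be injective functions, let α₀, α₁ ∈ (ZMod 2)^n with α₀ ≠ α₁, and define f : ZMod 2 × (ZMod 2)^n → (ZMod 2)^n by f(b, x) = R₂(x + R₁(α_b)). Then for all b, b' ∈ ZMod 2 and x, x' ∈ (ZMod 2)^n: f(b', x') = f(b, x) if and only if either (b' = b and x' = x) or (b' ≠ b and x' + x = R₁(α₀) + R₁(α₁)). In particular f satisfies f(b, x) = f(b + 1, x + s') with s' = R₁(α₀) + R₁(α₁), i.e., f satisfies Simon's promise with hidden period s = (1, R₁(α₀) + R₁(α₁)). -/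
theorem char_two_swap {n : ℕ} (a b c d : Fin n → ZMod 2) :
    a + c = b + d ↔ a + b = c + d := by
  have key : ∀ p q r s : ZMod 2, p + r = q + s ↔ p + q = r + s := by decide
  simp only [funext_iff, Pi.add_apply]
  exact forall_congr' fun i => key _ _ _ _

/-- Simon's function `f(b, x) = R₂(x + R₁(α_b))` for the three-round
Feistel attack with injective round functions: `f(b', x') = f(b, x)` iff
`(b' = b ∧ x' = x)` or `(b' ≠ b ∧ x' + x = R₁(α₀) + R₁(α₁))`; in particular `f`
satisfies Simon's promise with hidden period `(1, R₁(α₀) + R₁(α₁))`. -/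
theorem feistel_simon_promise (n : ℕ)
    (R₁ R₂ : (Fin n → ZMod 2) → (Fin n → ZMod 2))
    (hR₁ : Function.Injective R₁) (hR₂ : Function.Injective R₂)
    (α₀ α₁ : Fin n → ZMod 2) (hα : α₀ ≠ α₁)
    (f : ZMod 2 × (Fin n → ZMod 2) → (Fin n → ZMod 2))
    (hf : ∀ (b : ZMod 2) (x : Fin n → ZMod 2),
      f (b, x) = R₂ (x + R₁ (if b = 0 then α₀ else α₁))) :
    (∀ (b b' : ZMod 2) (x x' : Fin n → ZMod 2),
      f (b', x') = f (b, x) ↔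
        (b' = b ∧ x' = x) ∨ (b' ≠ b ∧ x' + x = R₁ α₀ + R₁ α₁)) ∧
    (∀ (b : ZMod 2) (x : Fin n → ZMod 2),
      f (b, x) = f (b + 1, x + (R₁ α₀ + R₁ α₁))) := by
  have h01 : ∀ b : ZMod 2, b = 0 ∨ b = 1 := by decide
  have h10 : (1 : ZMod 2) ≠ 0 := by decide
  have h11 : (1 : ZMod 2) + 1 = 0 := by decide
  have main : ∀ (b b' : ZMod 2) (x x' : Fin n → ZMod 2),
      f (b', x') = f (b, x) ↔
        (b' = b ∧ x' = x) ∨ (b' ≠ b ∧ x' + x = R₁ α₀ + R₁ α₁) := by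
    intro b b' x x'
    rw [hf, hf, hR₂.eq_iff]
    rcases h01 b with rfl | rfl <;> rcases h01 b' with rfl | rfl
    · simp
    · rw [char_two_swap]
      simp [add_comm (R₁ α₁)]
    · simp [char_two_swap]
    · simp
  refine ⟨main, fun b x => ?_⟩
  rw [main]
  refine Or.inr ⟨?_, ?_⟩
  · rcases h01 b with rfl | rfl <;> decide
  · rw [← add_assoc, ← add_assoc, show x + x = 0 from ?_, zero_add]
    funext i
    exact CharTwo.add_self_eq_zero (x i)
end

section
/- Consider the three-round Feistel scheme E on (ZMod 2)^n × (ZMod 2)^n with round functions R₁, R₂, R₃, mapping (x_L, x_R) to (y_L, y_R) via (u₀, v₀) = (x_L, x_R), (u_i, v_i) = (v_{i-1} + R_i(u_{i-1}), u_{i-1}), (y_L, y_R) = (u₃, v₃). Fix α₀, α₁ ∈ (ZMod 2)^n and x ∈ (ZMod 2)^n. Let (y_L, y_R) = E(α₀, x) and (y'_L, y'_R) = E(α₁, x + R₁(α₀) + R₁(α₁)). Then y_R + y'_R = α₀ + α₁. -/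
/-- One round of a Feistel scheme: `(u, v) ↦ (v + R(u), u)`. -/
def feistelRound {n : ℕ} (R : (Fin n → ZMod 2) → (Fin n → ZMod 2))
    (uv : (Fin n → ZMod 2) × (Fin n → ZMod 2)) :
    (Fin n → ZMod 2) × (Fin n → ZMod 2) :=
  (uv.2 + R uv.1, uv.1)

/-- The three-round Feistel scheme with round functions `R₁, R₂, R₃`. -/
def feistel3 {n : ℕ} (R₁ R₂ R₃ : (Fin n → ZMod 2) → (Fin n → ZMod 2))
    (xy : (Fin n → ZMod 2) × (Fin n → ZMod 2)) :
    (Fin n → ZMod 2) × (Fin n → ZMod 2) :=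
  feistelRound R₃ (feistelRound R₂ (feistelRound R₁ xy))

/-- classical verification step for the Feistel attack. If
`(y_L, y_R) = E(α₀, x)` and `(y'_L, y'_R) = E(α₁, x + R₁(α₀) + R₁(α₁))`,
then `y_R + y'_R = α₀ + α₁`. -/
theorem feistel3_verification (n : ℕ)
    (R₁ R₂ R₃ : (Fin n → ZMod 2) → (Fin n → ZMod 2))
    (α₀ α₁ x : Fin n → ZMod 2) :
    (feistel3 R₁ R₂ R₃ (α₀, x)).2 +
        (feistel3 R₁ R₂ R₃ (α₁, x + R₁ α₀ + R₁ α₁)).2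
      = α₀ + α₁ := by
  have key : ∀ a : Fin n → ZMod 2, a + a = 0 := fun a =>
    funext fun i => CharTwo.add_self_eq_zero (a i)
  have h : x + R₁ α₀ + R₁ α₁ + R₁ α₁ = x + R₁ α₀ := by
    rw [add_assoc, key, add_zero]
  simp only [feistel3, feistelRound]
  rw [h, add_add_add_comm, key, add_zero]
end

section
/- Let R₁, R₂ : (ZMod 2)^n → (ZMod 2)^n be arbitrary functions, let α₀, α₁ ∈ (ZMod 2)^n, set s' = R₁(α₀) + R₁(α₁), and define f : ZMod 2 × (ZMod 2)^n → (ZMod 2)^n by f(b, x) = R₂(x + R₁(α_b)). Suppose there exists a pair (τ, t) ∈ ZMod 2 × (ZMod 2)^n with (τ, t) ∉ {(0, 0), (1, s')} such that Pr_{(b,x)}[f(b, x) = f(b + τ, x + t)] > 1/2, where (b, x) is uniform over ZMod 2 × (ZMod 2)^n. Then there exists u ∈ (ZMod 2)^n with u ≠ 0 such that Pr_x[R₂(x) = R₂(x + u)] > 1/2. -/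
open scoped Classical in
/-- for the Feistel Simon function `f(b, x) = R₂(x + R₁(α_b))` with
arbitrary round functions, if some `(τ, t) ∉ {(0,0), (1, s')}` (where
`s' = R₁(α₀) + R₁(α₁)`) satisfies `Pr_{(b,x)}[f(b,x) = f(b+τ, x+t)] > 1/2`, then
`R₂` has a collision differential `u ≠ 0` with `Pr_x[R₂(x) = R₂(x+u)] > 1/2`. -/
theorem feistel_epsilon_bound (n : ℕ)
    (R₁ R₂ : (Fin n → ZMod 2) → (Fin n → ZMod 2))
    (α₀ α₁ : Fin n → ZMod 2)
    (f : ZMod 2 × (Fin n → ZMod 2) → (Fin n → ZMod 2))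
    (hf : ∀ (b : ZMod 2) (x : Fin n → ZMod 2),
      f (b, x) = R₂ (x + R₁ (if b = 0 then α₀ else α₁)))
    (h : ∃ (τ : ZMod 2) (t : Fin n → ZMod 2),
      (τ, t) ≠ ((0 : ZMod 2), (0 : Fin n → ZMod 2)) ∧
      (τ, t) ≠ ((1 : ZMod 2), R₁ α₀ + R₁ α₁) ∧
      ((Finset.univ.filter (fun bx : ZMod 2 × (Fin n → ZMod 2) =>
          f bx = f (bx.1 + τ, bx.2 + t))).card : ℝ)
          / (Fintype.card (ZMod 2 × (Fin n → ZMod 2)) : ℝ) > 1 / 2) :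
    ∃ u : Fin n → ZMod 2, u ≠ 0 ∧
      ((Finset.univ.filter (fun x : Fin n → ZMod 2 =>
          R₂ x = R₂ (x + u))).card : ℝ) / 2 ^ n > 1 / 2 := by
  obtain ⟨τ, t, h0, h1, hp⟩ := h
  have hd : ∀ v : Fin n → ZMod 2, v + v = 0 := fun v => by
    ext i; exact CharTwo.add_self_eq_zero (v i)
  have hc : ∀ v w : Fin n → ZMod 2, v + w + w = v := fun v w => by
    rw [add_assoc, hd, add_zero]
  have h01 : ∀ b : ZMod 2, b = 0 ∨ b = 1 := by decide
  have h11 : (1 : ZMod 2) + 1 = 0 := by decide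
  obtain ⟨u, hu0, hu⟩ : ∃ u : Fin n → ZMod 2, u ≠ 0 ∧ ∀ (b : ZMod 2) (x : Fin n → ZMod 2),
      x + t + R₁ (if b + τ = 0 then α₀ else α₁) =
        x + R₁ (if b = 0 then α₀ else α₁) + u := by
    rcases h01 τ with rfl | rfl
    · refine ⟨t, fun ht => h0 (by rw [ht]), fun b x => ?_⟩
      rw [add_zero]; abel
    · refine ⟨t + (R₁ α₀ + R₁ α₁), fun ht => h1 ?_, fun b x => ?_⟩
      · have := hc t (R₁ α₀ + R₁ α₁)
        rw [ht, zero_add] at this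
        rw [this]
      · rcases h01 b with rfl | rfl
        · simp only [zero_add, one_ne_zero, if_true, if_false]
          have e : x + R₁ α₀ + (t + (R₁ α₀ + R₁ α₁)) = x + t + R₁ α₁ + R₁ α₀ + R₁ α₀ := by abel
          rw [e, hc]
        · simp only [h11, one_ne_zero, if_true, if_false]
          have e : x + R₁ α₁ + (t + (R₁ α₀ + R₁ α₁)) = x + t + R₁ α₀ + R₁ α₁ + R₁ α₁ := by abel
          rw [e, hc]
  refine ⟨u, hu0, ?_⟩
  have key : (Finset.univ.filter (fun bx : ZMod 2 × (Fin n → ZMod 2) =>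
          f bx = f (bx.1 + τ, bx.2 + t))).card =
      ((Finset.univ : Finset (ZMod 2)) ×ˢ (Finset.univ.filter (fun x : Fin n → ZMod 2 =>
          R₂ x = R₂ (x + u)))).card := by
    refine Finset.card_nbij'
      (fun bx => (bx.1, bx.2 + R₁ (if bx.1 = 0 then α₀ else α₁)))
      (fun bx => (bx.1, bx.2 + R₁ (if bx.1 = 0 then α₀ else α₁))) ?_ ?_ ?_ ?_
    · rintro ⟨b, x⟩ hx
      simpa [hf, hu] using hx
    · rintro ⟨b, x⟩ hx
      simpa [hf, hu, hc] using hx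
    · rintro ⟨b, x⟩ _
      simp [hc]
    · rintro ⟨b, x⟩ _
      simp [hc]
  rw [key, Finset.card_product] at hp
  simp only [Fintype.card_prod, Finset.card_univ, ZMod.card, Fintype.card_fun,
    Fintype.card_fin] at hp
  push_cast at hp
  rwa [mul_div_mul_left _ _ (two_ne_zero)] at hp
end

section
/- Let P : (ZMod 2)^n → (ZMod 2)^n be a function, k₁, k₂ ∈ (ZMod 2)^n, and define the Even–Mansour cipher E(x) = P(x + k₁) + k₂ and Simon's function f(x) = E(x) + P(x) = P(x + k₁) + P(x) + k₂. Then: (1) for all x, f(x + k₁) = f(x); and (2) if there exists t ∈ (ZMod 2)^n with t ∉ {0, k₁} such that Pr_x[f(x) = f(x + t)] > 1/2, then Pr_x[P(x) + P(x + k₁) + P(x + t) + P(x + t + k₁) = 0] > 1/2, i.e., P has a higher-order differential that holds with probability greater than 1/2. -/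
open scoped Classical in
/-- for the Even–Mansour cipher `E(x) = P(x + k₁) + k₂` and Simon's
function `f(x) = E(x) + P(x)`: (1) `f(x + k₁) = f(x)` for all `x`; (2) if some
`t ∉ {0, k₁}` satisfies `Pr_x[f(x) = f(x+t)] > 1/2`, then
`Pr_x[P(x) + P(x+k₁) + P(x+t) + P(x+t+k₁) = 0] > 1/2`. -/
theorem even_mansour_simon (n : ℕ)
    (P : (Fin n → ZMod 2) → (Fin n → ZMod 2)) (k₁ k₂ : Fin n → ZMod 2)
    (E f : (Fin n → ZMod 2) → (Fin n → ZMod 2))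
    (hE : ∀ x, E x = P (x + k₁) + k₂)
    (hfdef : ∀ x, f x = E x + P x) :
    (∀ x, f (x + k₁) = f x) ∧
    (∀ t : Fin n → ZMod 2, t ≠ 0 → t ≠ k₁ →
      ((Finset.univ.filter (fun x : Fin n → ZMod 2 =>
          f x = f (x + t))).card : ℝ) / 2 ^ n > 1 / 2 →
      ((Finset.univ.filter (fun x : Fin n → ZMod 2 =>
          P x + P (x + k₁) + P (x + t) + P (x + t + k₁) = 0)).card : ℝ) / 2 ^ n
        > 1 / 2) := by
  have hself : ∀ v : Fin n → ZMod 2, v + v = 0 := by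
    intro v
    funext i
    exact CharTwo.add_self_eq_zero (v i)
  refine ⟨?_, ?_⟩
  · intro x
    have hx : x + k₁ + k₁ = x := by rw [add_assoc, hself, add_zero]
    rw [hfdef, hfdef, hE, hE, hx]
    abel
  · intro t _ _ h
    have key : ∀ x, f x = f (x + t) →
        P x + P (x + k₁) + P (x + t) + P (x + t + k₁) = 0 := by
      intro x hx
      rw [hfdef, hfdef, hE, hE] at hx
      have h1 : P (x + k₁) + P x = P (x + t + k₁) + P (x + t) := by
        apply add_right_cancel (b := k₂)
        calc P (x + k₁) + P x + k₂ = P (x + k₁) + k₂ + P x := by abel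
          _ = P (x + t + k₁) + k₂ + P (x + t) := hx
          _ = P (x + t + k₁) + P (x + t) + k₂ := by abel
      calc P x + P (x + k₁) + P (x + t) + P (x + t + k₁)
          = (P (x + k₁) + P x) + (P (x + t + k₁) + P (x + t)) := by abel
        _ = 0 := by rw [h1, hself]
    refine lt_of_lt_of_le h ?_
    apply div_le_div_of_nonneg_right _ (by positivity)
    exact_mod_cast Finset.card_le_card (Finset.monotone_filter_right _ (fun x _ hx => key x hx))
end

section
/- Let E : (ZMod 2)^n → (ZMod 2)^n be a function, let h₀, h₁ ∈ (ZMod 2)^n (the hash values h(t₀), h(t₁) of two fixed tweaks in the LRW construction Ẽ_t(x) = E(x + h(t)) + h(t)), set s = h₀ + h₁, and define f : (ZMod 2)^n → (ZMod 2)^n by f(x) = E(x + h₀) + h₀ + E(x + h₁) + h₁. Then: (1) for all x, f(x + s) = f(x); and (2) if there exists t ∈ (ZMod 2)^n with t ∉ {0, s} such that Pr_x[f(x) = f(x + t)] > 1/2, then Pr_x[E(x) + E(x + s) + E(x + t) + E(x + t + s) = 0] > 1/2, i.e., E has a higher-order differential that holds with probability greater than 1/2. -/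
open scoped Classical in
/-- for the LRW Simon function
`f(x) = E(x + h₀) + h₀ + E(x + h₁) + h₁` with `s = h₀ + h₁`:
(1) `f(x + s) = f(x)` for all `x`; (2) if some `t ∉ {0, s}` satisfies
`Pr_x[f(x) = f(x+t)] > 1/2`, then
`Pr_x[E(x) + E(x+s) + E(x+t) + E(x+t+s) = 0] > 1/2`. -/
theorem lrw_simon (n : ℕ)
    (E : (Fin n → ZMod 2) → (Fin n → ZMod 2)) (h₀ h₁ : Fin n → ZMod 2)
    (s : Fin n → ZMod 2) (hs : s = h₀ + h₁)
    (f : (Fin n → ZMod 2) → (Fin n → ZMod 2))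
    (hfdef : ∀ x, f x = E (x + h₀) + h₀ + E (x + h₁) + h₁) :
    (∀ x, f (x + s) = f x) ∧
    (∀ t : Fin n → ZMod 2, t ≠ 0 → t ≠ s →
      ((Finset.univ.filter (fun x : Fin n → ZMod 2 =>
          f x = f (x + t))).card : ℝ) / 2 ^ n > 1 / 2 →
      ((Finset.univ.filter (fun x : Fin n → ZMod 2 =>
          E x + E (x + s) + E (x + t) + E (x + t + s) = 0)).card : ℝ) / 2 ^ n
        > 1 / 2) := by
  have h2 : ∀ a : Fin n → ZMod 2, a + a = 0 := fun a => by
    funext i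
    exact CharTwo.add_self_eq_zero (a i)
  have e1 : ∀ x, x + s + h₀ = x + h₁ := fun x => by
    have : x + s + h₀ = x + h₁ + (h₀ + h₀) := by rw [hs]; abel
    rw [this, h2, add_zero]
  have e2 : ∀ x, x + s + h₁ = x + h₀ := fun x => by
    have : x + s + h₁ = x + h₀ + (h₁ + h₁) := by rw [hs]; abel
    rw [this, h2, add_zero]
  refine ⟨fun x => ?_, fun t _ _ ht => ?_⟩
  · rw [hfdef, hfdef, e1, e2]
    abel
  · refine lt_of_lt_of_le ht ?_
    gcongr ?_ / _
    norm_cast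
    refine Finset.card_le_card_of_injOn (fun x => x + h₀) ?_
      (fun a _ b _ hab => add_right_cancel hab)
    intro x hx
    simp only [Finset.coe_filter, Finset.mem_univ, true_and, Set.mem_setOf_eq] at hx ⊢
    have a1 : x + h₀ + s = x + h₁ := by rw [← e1 x]; abel
    have a2 : x + h₀ + t = x + t + h₀ := by abel
    have a3 : x + t + h₀ + s = x + t + h₁ := by rw [← e1 (x + t)]; abel
    rw [a1, a2, a3]
    have key : f x + f (x + t) = 0 := by rw [← hx, h2]
    rw [hfdef, hfdef] at key
    have : E (x + h₀) + E (x + h₁) + E (x + t + h₀) + E (x + t + h₁) + (h₀ + h₀) + (h₁ + h₁) = 0 := by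
      rw [← key]; abel
    simpa only [h2, add_zero] using this
end

section
/- Let E, E' : (ZMod 2)^n → (ZMod 2)^n be injective functions, let α₀, α₁ ∈ (ZMod 2)^n with α₀ ≠ α₁, and define f : ZMod 2 × (ZMod 2)^n → (ZMod 2)^n by f(b, x) = E'(E(x + E(α_b))). (This is f(b, x) = CBC-MAC(α_b ‖ x) for encrypted CBC-MAC with block cipher E and finalization cipher E'.) Then for all b, b' ∈ ZMod 2 and x, x' ∈ (ZMod 2)^n: f(b', x') = f(b, x) if and only if either (b' = b and x' = x) or (b' ≠ b and x' + x = E(α₀) + E(α₁)). In particular, f satisfies Simon's promise with hidden period s = (1, E(α₀) + E(α₁)). -/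
theorem vec_add_self {n : ℕ} (y : Fin n → ZMod 2) : y + y = 0 := by
  funext i
  exact CharTwo.add_self_eq_zero (y i)

theorem vec_swap {n : ℕ} (x x' u v : Fin n → ZMod 2) :
    x' + u = x + v ↔ x' + x = u + v := by
  constructor
  · intro h
    have h2 : x' + x + (u + u) = (x + x) + (u + v) := by
      calc x' + x + (u + u) = (x' + u) + (x + u) := by abel
        _ = (x + v) + (x + u) := by rw [h]
        _ = _ := by abel
    simpa [vec_add_self] using h2
  · intro h
    have h2 : x' + u + (x + x) = (u + u) + (x + v) := by
      calc x' + u + (x + x) = (x' + x) + (x + u) := by abel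
        _ = (u + v) + (x + u) := by rw [h]
        _ = _ := by abel
    simpa [vec_add_self] using h2

/-- Simon's function for encrypted CBC-MAC,
`f(b, x) = E'(E(x + E(α_b)))` with `E, E'` injective: `f(b', x') = f(b, x)` iff
`(b' = b ∧ x' = x)` or `(b' ≠ b ∧ x' + x = E(α₀) + E(α₁))`; in particular `f`
satisfies Simon's promise with hidden period `(1, E(α₀) + E(α₁))`. -/
theorem cbcmac_simon_promise (n : ℕ)
    (E E' : (Fin n → ZMod 2) → (Fin n → ZMod 2))
    (hE : Function.Injective E) (hE' : Function.Injective E')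
    (α₀ α₁ : Fin n → ZMod 2) (hα : α₀ ≠ α₁)
    (f : ZMod 2 × (Fin n → ZMod 2) → (Fin n → ZMod 2))
    (hf : ∀ (b : ZMod 2) (x : Fin n → ZMod 2),
      f (b, x) = E' (E (x + E (if b = 0 then α₀ else α₁)))) :
    (∀ (b b' : ZMod 2) (x x' : Fin n → ZMod 2),
      f (b', x') = f (b, x) ↔
        (b' = b ∧ x' = x) ∨ (b' ≠ b ∧ x' + x = E α₀ + E α₁)) ∧
    (∀ (b : ZMod 2) (x : Fin n → ZMod 2),
      f (b, x) = f (b + 1, x + (E α₀ + E α₁))) := by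
  have key : ∀ (b b' : ZMod 2) (x x' : Fin n → ZMod 2),
      f (b', x') = f (b, x) ↔
        (b' = b ∧ x' = x) ∨ (b' ≠ b ∧ x' + x = E α₀ + E α₁) := by
    intro b b' x x'
    rw [hf, hf, hE'.eq_iff, hE.eq_iff]
    have hb : ∀ c : ZMod 2, c = 0 ∨ c = 1 := by decide
    rcases hb b with rfl | rfl <;> rcases hb b' with rfl | rfl
    · simp
    · rw [vec_swap, add_comm (E _)]
      simp
    · simp [vec_swap]
    · simp
  refine ⟨key, fun b x => ?_⟩
  rw [key]
  right
  refine ⟨by revert b; decide, ?_⟩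
  rw [← add_assoc, vec_add_self, zero_add]
end

section
/- Let F be a field of characteristic 2 (e.g. GF(2^n)), let H ∈ F with H ≠ 0, let α₀, α₁ ∈ F with α₀ ≠ α₁, let c ∈ F, and define f : ZMod 2 × F → F by f(b, x) = α_b·H² + x·H + c. (This is f(b, x) = GMAC(N, α_b ‖ x) with hash key H and mask c = E_k(N ‖ 1).) Then for all b, b' ∈ ZMod 2 and x, x' ∈ F: f(b', x') = f(b, x) if and only if either (b' = b and x' = x) or (b' ≠ b and x' + x = (α₀ + α₁)·H). In particular, f satisfies Simon's promise with hidden period s = (1, (α₀ + α₁)·H). -/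
/-- Simon's function for GMAC, `f(b, x) = α_b·H² + x·H + c` over a
field `F` of characteristic 2, with `H ≠ 0` and `α₀ ≠ α₁`: `f(b', x') = f(b, x)` iff
`(b' = b ∧ x' = x)` or `(b' ≠ b ∧ x' + x = (α₀ + α₁)·H)`; in particular `f`
satisfies Simon's promise with hidden period `(1, (α₀ + α₁)·H)`. -/
theorem gmac_simon_promise (F : Type*) [Field F] [CharP F 2]
    (H : F) (hH : H ≠ 0) (α₀ α₁ : F) (hα : α₀ ≠ α₁) (c : F)
    (f : ZMod 2 × F → F)
    (hf : ∀ (b : ZMod 2) (x : F),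
      f (b, x) = (if b = 0 then α₀ else α₁) * H ^ 2 + x * H + c) :
    (∀ (b b' : ZMod 2) (x x' : F),
      f (b', x') = f (b, x) ↔
        (b' = b ∧ x' = x) ∨ (b' ≠ b ∧ x' + x = (α₀ + α₁) * H)) ∧
    (∀ (b : ZMod 2) (x : F),
      f (b, x) = f (b + 1, x + (α₀ + α₁) * H)) := by
  have h2 : (2 : F) = 0 := CharTwo.two_eq_zero
  have key : ∀ a a' x x' : F,
      a' * H ^ 2 + x' * H + c = a * H ^ 2 + x * H + c ↔ x' + x = (a + a') * H := by
    intro a a' x x'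
    constructor
    · intro h
      apply mul_right_cancel₀ hH
      linear_combination h + (x * H - a' * H ^ 2) * h2
    · intro h
      linear_combination H * h + (a' * H ^ 2 - x * H) * h2
  have same : ∀ a x x' : F, x' + x = (a + a) * H ↔ x' = x := by
    intro a x x'
    constructor
    · intro h
      linear_combination h + (a * H - x) * h2
    · intro h
      linear_combination h + (x - a * H) * h2
  have cases2 : ∀ b : ZMod 2, b = 0 ∨ b = 1 := by decide
  have h10 : (1 : ZMod 2) ≠ 0 := by decide
  have h11 : (1 : ZMod 2) + 1 = 0 := by decide
  constructor
  · intro b b' x x'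
    rw [hf, hf, key]
    rcases cases2 b with rfl | rfl <;> rcases cases2 b' with rfl | rfl
    · simp [same]
    · simp
    · simp [add_comm α₁ α₀]
    · simp [same]
  · intro b x
    rw [hf, hf, key]
    rcases cases2 b with rfl | rfl
    · simp only [zero_add, if_true, if_neg h10]
      linear_combination (x - 0) * h2
    · simp only [h11, if_true, if_neg h10]
      linear_combination (x - 0) * h2
end

section
/- (Simon promise for slide attacks.) Let E, P : (ZMod 2)^n → (ZMod 2)^n be functions and k ∈ (ZMod 2)^n, and suppose the slide property holds: for all x, P(E(x)) + k = E(P(x + k)). Define f : ZMod 2 × (ZMod 2)^n → (ZMod 2)^n by f(0, x) = P(E(x)) + x and f(1, x) = E(P(x)) + x. Then for all b ∈ ZMod 2 and x ∈ (ZMod 2)^n, f(b, x) = f(b + 1, x + k); i.e., f is periodic with period s = (1, k). -/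
/-- Simon promise for slide attacks: if the slide property
`P(E(x)) + k = E(P(x + k))` holds for all `x`, then the function
`f(0, x) = P(E(x)) + x`, `f(1, x) = E(P(x)) + x` satisfies
`f(b, x) = f(b + 1, x + k)` for all `b, x`, i.e. `f` is periodic with period `(1, k)`. -/
theorem slide_simon_promise (n : ℕ)
    (E P : (Fin n → ZMod 2) → (Fin n → ZMod 2)) (k : Fin n → ZMod 2)
    (hslide : ∀ x, P (E x) + k = E (P (x + k)))
    (f : ZMod 2 × (Fin n → ZMod 2) → (Fin n → ZMod 2))
    (hf0 : ∀ x, f (0, x) = P (E x) + x)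
    (hf1 : ∀ x, f (1, x) = E (P x) + x) :
    ∀ (b : ZMod 2) (x : Fin n → ZMod 2), f (b, x) = f (b + 1, x + k) := by
  have hkk : k + k = 0 := by
    funext i
    exact CharTwo.add_self_eq_zero (k i)
  have key : ∀ x, f (0, x) = f (1, x + k) := by
    intro x
    rw [hf0, hf1, ← hslide]
    calc P (E x) + x = P (E x) + x + (k + k) := by rw [hkk, add_zero]
      _ = P (E x) + k + (x + k) := by abel
  intro b x
  have hb : b = 0 ∨ b = 1 := by
    revert b
    decide
  rcases hb with rfl | rfl
  · rw [zero_add]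
    exact key x
  · have h11 : (1 : ZMod 2) + 1 = 0 := by decide
    rw [h11, key (x + k), add_assoc, hkk, add_zero]
end

section
/- Let E, P : (ZMod 2)^n → (ZMod 2)^n be functions and k ∈ (ZMod 2)^n satisfying the slide property: for all x, P(E(x)) + k = E(P(x + k)). Define f : ZMod 2 × (ZMod 2)^n → (ZMod 2)^n by f(0, x) = P(E(x)) + x and f(1, x) = E(P(x)) + x. Suppose there exists (τ, t) ∈ ZMod 2 × (ZMod 2)^n with (τ, t) ∉ {(0, 0), (1, k)} such that Pr_{(b,x)}[f(b, x) = f(b + τ, x + t)] > 1/2, where (b, x) is uniform over ZMod 2 × (ZMod 2)^n. Then there exists u ∈ (ZMod 2)^n with u ≠ 0 such that Pr_x[P(E(x)) + P(E(x + u)) = u] > 1/2 or Pr_x[E(P(x)) + E(P(x + u)) = u] > 1/2; i.e., P ∘ E or E ∘ P has a differential holding with probability greater than 1/2. -/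
open scoped Classical in
/-- for the slide-attack Simon function `f(0, x) = P(E(x)) + x`,
`f(1, x) = E(P(x)) + x` under the slide property, if some
`(τ, t) ∉ {(0,0), (1,k)}` satisfies `Pr_{(b,x)}[f(b,x) = f(b+τ, x+t)] > 1/2`, then
`P ∘ E` or `E ∘ P` has a differential `u ≠ 0` holding with probability `> 1/2`. -/
theorem slide_epsilon_bound (n : ℕ)
    (E P : (Fin n → ZMod 2) → (Fin n → ZMod 2)) (k : Fin n → ZMod 2)
    (hslide : ∀ x, P (E x) + k = E (P (x + k)))
    (f : ZMod 2 × (Fin n → ZMod 2) → (Fin n → ZMod 2))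
    (hf0 : ∀ x, f (0, x) = P (E x) + x)
    (hf1 : ∀ x, f (1, x) = E (P x) + x)
    (h : ∃ (τ : ZMod 2) (t : Fin n → ZMod 2),
      (τ, t) ≠ ((0 : ZMod 2), (0 : Fin n → ZMod 2)) ∧
      (τ, t) ≠ ((1 : ZMod 2), k) ∧
      ((Finset.univ.filter (fun bx : ZMod 2 × (Fin n → ZMod 2) =>
          f bx = f (bx.1 + τ, bx.2 + t))).card : ℝ)
          / (Fintype.card (ZMod 2 × (Fin n → ZMod 2)) : ℝ) > 1 / 2) :
    ∃ u : Fin n → ZMod 2, u ≠ 0 ∧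
      (((Finset.univ.filter (fun x : Fin n → ZMod 2 =>
          P (E x) + P (E (x + u)) = u)).card : ℝ) / 2 ^ n > 1 / 2 ∨
       ((Finset.univ.filter (fun x : Fin n → ZMod 2 =>
          E (P x) + E (P (x + u)) = u)).card : ℝ) / 2 ^ n > 1 / 2) := by
  have two : ∀ v : Fin n → ZMod 2, v + v = 0 := fun v => by
    funext i; exact CharTwo.add_self_eq_zero (v i)
  have key : ∀ x, f (0, x) = f (1, x + k) := fun x => by
    rw [hf0, hf1, ← hslide x]
    have := two k
    linear_combination -this
  have key' : ∀ x, f (1, x) = f (0, x + k) := fun x => by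
    rw [key, add_assoc, two, add_zero]
  have aux : ∀ a b x u : Fin n → ZMod 2, a + x = b + (x + u) → a + b = u := by
    intro a b x u hh
    have := two b
    linear_combination hh + this
  obtain ⟨τ, t, h0, h1, h⟩ := h
  obtain ⟨u, hu, hfu⟩ : ∃ u : Fin n → ZMod 2, u ≠ 0 ∧
      ∀ (b : ZMod 2) x, f (b + τ, x + t) = f (b, x + u) := by
    have hc : ∀ c : ZMod 2, c = 0 ∨ c = 1 := by decide
    have h11 : (1 : ZMod 2) + 1 = 0 := by decide
    rcases hc τ with rfl | rfl
    · refine ⟨t, fun e => h0 (by rw [e]), fun b x => by rw [add_zero]⟩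
    · refine ⟨t + k, fun e => h1 ?_, fun b x => ?_⟩
      · have := two k
        have e2 : t = k := by linear_combination e - this
        rw [e2]
      · rcases hc b with rfl | rfl
        · rw [zero_add, key', add_assoc]
        · rw [h11, key, add_assoc]
  refine ⟨u, hu, ?_⟩
  set A := Finset.univ.filter (fun x : Fin n → ZMod 2 => P (E x) + P (E (x + u)) = u) with hA
  set B := Finset.univ.filter (fun x : Fin n → ZMod 2 => E (P x) + E (P (x + u)) = u) with hB
  have hsub : Finset.univ.filter (fun bx : ZMod 2 × (Fin n → ZMod 2) =>
      f bx = f (bx.1 + τ, bx.2 + t)) ⊆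
      A.image (fun x => ((0 : ZMod 2), x)) ∪ B.image (fun x => ((1 : ZMod 2), x)) := by
    rintro ⟨b, x⟩ hb
    have hb2 : f (b, x) = f (b + τ, x + t) := (Finset.mem_filter.1 hb).2
    rw [hfu] at hb2
    have hc : ∀ c : ZMod 2, c = 0 ∨ c = 1 := by decide
    rcases hc b with rfl | rfl
    · rw [hf0, hf0] at hb2
      exact Finset.mem_union_left _ (Finset.mem_image.2
        ⟨x, Finset.mem_filter.2 ⟨Finset.mem_univ _, aux _ _ _ _ hb2⟩, rfl⟩)
    · rw [hf1, hf1] at hb2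
      exact Finset.mem_union_right _ (Finset.mem_image.2
        ⟨x, Finset.mem_filter.2 ⟨Finset.mem_univ _, aux _ _ _ _ hb2⟩, rfl⟩)
  have hcard := (Finset.card_le_card hsub).trans ((Finset.card_union_le _ _).trans
    (Nat.add_le_add Finset.card_image_le Finset.card_image_le))
  have hcardR : ((Finset.univ.filter (fun bx : ZMod 2 × (Fin n → ZMod 2) =>
      f bx = f (bx.1 + τ, bx.2 + t))).card : ℝ) ≤ (A.card : ℝ) + B.card := by
    exact_mod_cast hcard
  have hF : (Fintype.card (ZMod 2 × (Fin n → ZMod 2)) : ℝ) = 2 * 2 ^ n := by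
    rw [Fintype.card_prod, Fintype.card_fun, ZMod.card, Fintype.card_fin]
    push_cast
    rfl
  have hp : (0 : ℝ) < 2 ^ n := by positivity
  rw [hF, gt_iff_lt, lt_div_iff₀ (by positivity)] at h
  rw [gt_iff_lt, gt_iff_lt, lt_div_iff₀ hp, lt_div_iff₀ hp]
  by_contra hcon
  rw [not_or, not_lt, not_lt] at hcon
  linarith [hcon.1, hcon.2]
end

section
/- (Minalpher collision structure.) Let P : (ZMod 2)^n → (ZMod 2)^n be injective, let φ : (ZMod 2)^n → (ZMod 2)^n be injective, let Δ ∈ (ZMod 2)^n, let α₀, α₁ ∈ (ZMod 2)^n with α₀ ≠ α₁, and define f : ZMod 2 × (ZMod 2)^n → (ZMod 2)^n by f(b, x) = φ(P(α_b + Δ) + Δ + x). Then for all b, b' ∈ ZMod 2 and x, x' ∈ (ZMod 2)^n: f(b', x') = f(b, x) if and only if either (b' = b and x' = x) or (b' ≠ b and x' + x = P(α₀ + Δ) + P(α₁ + Δ)). In particular, f satisfies Simon's promise with hidden period s = (1, P(α₀ + Δ) + P(α₁ + Δ)), and s is independent of φ. -/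
/-- Minalpher collision structure: for
`f(b, x) = φ(P(α_b + Δ) + Δ + x)` with `P, φ` injective and `α₀ ≠ α₁`:
`f(b', x') = f(b, x)` iff `(b' = b ∧ x' = x)` or
`(b' ≠ b ∧ x' + x = P(α₀ + Δ) + P(α₁ + Δ))`; in particular `f` satisfies Simon's
promise with hidden period `(1, P(α₀ + Δ) + P(α₁ + Δ))`. -/
theorem minalpher_simon_promise (n : ℕ)
    (P φ : (Fin n → ZMod 2) → (Fin n → ZMod 2))
    (hP : Function.Injective P) (hφ : Function.Injective φ)
    (Δ : Fin n → ZMod 2) (α₀ α₁ : Fin n → ZMod 2) (hα : α₀ ≠ α₁)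
    (f : ZMod 2 × (Fin n → ZMod 2) → (Fin n → ZMod 2))
    (hf : ∀ (b : ZMod 2) (x : Fin n → ZMod 2),
      f (b, x) = φ (P ((if b = 0 then α₀ else α₁) + Δ) + Δ + x)) :
    (∀ (b b' : ZMod 2) (x x' : Fin n → ZMod 2),
      f (b', x') = f (b, x) ↔
        (b' = b ∧ x' = x) ∨ (b' ≠ b ∧ x' + x = P (α₀ + Δ) + P (α₁ + Δ))) ∧
    (∀ (b : ZMod 2) (x : Fin n → ZMod 2),
      f (b, x) = f (b + 1, x + (P (α₀ + Δ) + P (α₁ + Δ)))) := by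
  have key : ∀ p q d x y : ZMod 2, (p + d + x = q + d + y ↔ x + y = p + q) := by decide
  have keyv : ∀ p q d x y : Fin n → ZMod 2, (p + d + x = q + d + y ↔ x + y = p + q) := by
    intro p q d x y
    simp only [funext_iff, Pi.add_apply, key]
  have main : ∀ (b b' : ZMod 2) (x x' : Fin n → ZMod 2),
      f (b', x') = f (b, x) ↔
        (b' = b ∧ x' = x) ∨ (b' ≠ b ∧ x' + x = P (α₀ + Δ) + P (α₁ + Δ)) := by
    intro b b' x x'
    rw [hf, hf, hφ.eq_iff]
    have hz : ∀ c : ZMod 2, c = 0 ∨ c = 1 := by decide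
    have h10 : (1 : ZMod 2) ≠ 0 := by decide
    rcases hz b with rfl | rfl <;> rcases hz b' with rfl | rfl
    · simp
    · rw [keyv]; simp [add_comm (P (α₁ + Δ)) (P (α₀ + Δ))]
    · simp [h10, keyv]
    · simp
  refine ⟨main, fun b x => ?_⟩
  rw [main]
  right
  constructor
  · revert b; decide
  · have h : ∀ a c : ZMod 2, a + (a + c) = c := by decide
    funext i
    simp only [Pi.add_apply, h]
end
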